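/- arXiv:1107.1016 — 2 statements merged into one kernel-verified Lean document; each statement's English description precedes it below -/
import Mathlib

section
/- Let k ≥ 2, b¹,…,bᵏ > 0, R = {x ∈ ℝᵏ : |xⁱ| ≤ bⁱ for all i}, and let π : ℝᵏ → ℝ^(k−1) be the projection onto the first k−1 coordinates. Let P ⊂ ℝᵏ be a hyperplane not through the origin with foot of perpendicular r, with rᵏ > 0 and r⁺ = (bᵏ/rᵏ) r ∈ R. Let γ ∈ (0,1) with |r⁺| ≤ γ |r|, and let δ ≥ 0. Let p ∈ P ∩ R with π(p) ≠ 0 and y ∈ [0, p] with dist(y, P) ≤ δ · dist(0, P). Let T be the 2-dimensional subspace spanned by the k-th coordinate vector e_k and p, let ℓ = T ∩ P (assumed to meet {xᵏ = −bᵏ} in a single point q⁻), and let P' = π(P ∩ {x : xᵏ = −bᵏ}), a hyperplane in ℝ^(k−1). Then dist(π(y), P') ≤ (δ + 2γ) · dist(0, P'). -/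
open Metric Set
open scoped RealInnerProductSpace Pointwise

/-!
By the formula `dist(x, {z | ⟪z, a⟫ = c}) = |⟪x, a⟫ - c| / ‖a‖` both distance bounds reduce to linear
algebra.  Write `N = ‖r‖²`, `s = rᵏ`, `β = bᵏ` and `y = t p` with `t ∈ [0, 1]`.  The hypothesis on `y`
says `1 - t ≤ δ`, and the hypothesis on `r⁺` says `β ≤ γ s`.  The set `P'` is the hyperplane
`{z | ⟪z, π r⟫ = M}` with `M = N + β s`; here `π r ≠ 0`, since otherwise `P = {xᵏ = s}` would miss `R`
because `β < s`.  Since `⟪π p, π r⟫ = N - pᵏ s`,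
`M - ⟪π y, π r⟫ = (1 - t) M + t (pᵏ + β) s`, and `0 ≤ t (pᵏ + β) s ≤ 2 β s ≤ 2 γ s² ≤ 2 γ M`.
-/

/-- Distance from a point to an affine hyperplane with normal vector `a`. -/
lemma infDist_hyperplane {E : Type*} [NormedAddCommGroup E] [InnerProductSpace ℝ E]
    (a : E) (ha : a ≠ 0) (c : ℝ) (x : E) :
    infDist x {z : E | ⟪z, a⟫ = c} = |⟪x, a⟫ - c| / ‖a‖ := by
  have hn : 0 < ‖a‖ := norm_pos_iff.mpr ha
  -- the orthogonal projection of `x` onto the hyperplane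
  have hmem : x - ((⟪x, a⟫ - c) / ‖a‖ ^ 2) • a ∈ {z : E | ⟪z, a⟫ = c} := by
    simp only [mem_ofPred_eq, inner_sub_left, real_inner_smul_left, real_inner_self_eq_norm_sq]
    field_simp
    ring
  apply le_antisymm
  · refine (infDist_le_dist_of_mem hmem).trans (le_of_eq ?_)
    rw [dist_eq_norm, sub_sub_cancel, norm_smul, Real.norm_eq_abs, abs_div,
      abs_of_pos (pow_pos hn 2)]
    field_simp
  · refine (le_infDist ⟨_, hmem⟩).mpr fun z hz => ?_
    rw [div_le_iff₀ hn, dist_eq_norm]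
    have hz' : ⟪z, a⟫ = c := hz
    calc |⟪x, a⟫ - c| = |⟪x - z, a⟫| := by rw [inner_sub_left, hz']
      _ ≤ ‖x - z‖ * ‖a‖ := abs_real_inner_le_norm _ _

/-- Let `k ≥ 2`, `b¹, …, bᵏ > 0`,
`R = {x ∈ ℝᵏ | ∀ i, |xⁱ| ≤ bⁱ}`, and let `π : ℝᵏ → ℝ^(k-1)` be the projection
onto the first `k-1` coordinates.  Let `P = {x | ⟪x, r⟫ = ‖r‖²}` be a
hyperplane not through the origin with foot of perpendicular `r ≠ 0`, with
`rᵏ > 0` and `r⁺ = (bᵏ/rᵏ) • r ∈ R`.  Let `γ ∈ (0,1)` with `‖r⁺‖ ≤ γ ‖r‖`,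
and `δ ≥ 0`.  Let `p ∈ P ∩ R` with `π p ≠ 0`, and `y ∈ [0, p]` with
`dist(y, P) ≤ δ dist(0, P)`.  Let `T` be the span of the `k`-th coordinate
vector `e_k` and `p`, assume `ℓ = T ∩ P` meets `Q⁻ = {x | xᵏ = -bᵏ}` in a
single point, and let `P' = π (P ∩ Q⁻)`.  Then
`dist(π y, P') ≤ (δ + 2γ) dist(0, P')`. -/
theorem statement11 (k : ℕ) (hk : 2 ≤ k)
    (b : Fin k → ℝ) (hb : ∀ i, 0 < b i)
    (R : Set (EuclideanSpace ℝ (Fin k)))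
    (hR : R = {x | ∀ i, |x i| ≤ b i})
    (π : EuclideanSpace ℝ (Fin k) → EuclideanSpace ℝ (Fin (k - 1)))
    (hπ : ∀ x (i : Fin (k - 1)), π x i = x (Fin.castLE (Nat.sub_le k 1) i))
    (r : EuclideanSpace ℝ (Fin k)) (hr : r ≠ 0)
    (hrk : 0 < r ⟨k - 1, by omega⟩)
    (rp : EuclideanSpace ℝ (Fin k))
    (hrpdef : rp = (b ⟨k - 1, by omega⟩ / r ⟨k - 1, by omega⟩) • r)
    (hrpR : rp ∈ R)
    (γ : ℝ) (hγ0 : 0 < γ) (hγ1 : γ < 1) (hrpγ : ‖rp‖ ≤ γ * ‖r‖)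
    (δ : ℝ) (hδ : 0 ≤ δ)
    (p : EuclideanSpace ℝ (Fin k)) (hpP : ⟪p, r⟫ = ‖r‖ ^ 2) (hpR : p ∈ R)
    (hπp : π p ≠ 0)
    (y : EuclideanSpace ℝ (Fin k)) (hy : y ∈ segment ℝ 0 p)
    (hyP : infDist y {x : EuclideanSpace ℝ (Fin k) | ⟪x, r⟫ = ‖r‖ ^ 2} ≤
      δ * infDist 0 {x : EuclideanSpace ℝ (Fin k) | ⟪x, r⟫ = ‖r‖ ^ 2})
    (T : Submodule ℝ (EuclideanSpace ℝ (Fin k)))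
    (hT : T = Submodule.span ℝ {EuclideanSpace.single ⟨k - 1, by omega⟩ (1 : ℝ), p})
    (hline : ∃! q, q ∈ (T : Set (EuclideanSpace ℝ (Fin k))) ∩
        {x : EuclideanSpace ℝ (Fin k) | ⟪x, r⟫ = ‖r‖ ^ 2} ∩
        {x : EuclideanSpace ℝ (Fin k) | x ⟨k - 1, by omega⟩ = -(b ⟨k - 1, by omega⟩)})
    (P' : Set (EuclideanSpace ℝ (Fin (k - 1))))
    (hP' : P' = π '' ({x : EuclideanSpace ℝ (Fin k) | ⟪x, r⟫ = ‖r‖ ^ 2} ∩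
        {x : EuclideanSpace ℝ (Fin k) | x ⟨k - 1, by omega⟩ = -(b ⟨k - 1, by omega⟩)})) :
    infDist (π y) P' ≤ (δ + 2 * γ) * infDist 0 P' := by
  obtain ⟨m, rfl⟩ : ∃ m, k = m + 1 := ⟨k - 1, by omega⟩
  have hL : (⟨m + 1 - 1, by omega⟩ : Fin (m + 1)) = Fin.last m := rfl
  simp only [hL] at *
  have hsplit : ∀ x z : EuclideanSpace ℝ (Fin (m + 1)),
      ⟪x, z⟫ = ⟪π x, π z⟫ + x (Fin.last m) * z (Fin.last m) := by
    intro x z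
    simp only [PiLp.inner_apply, hπ]
    rw [Fin.sum_univ_castSucc]
    congr 1
    simp [mul_comm]
  set s := r (Fin.last m) with hs
  set β := b (Fin.last m) with hβ
  have hβ0 : 0 < β := hb _
  have hn : 0 < ‖r‖ := norm_pos_iff.mpr hr
  have hβγ : β ≤ γ * s := by
    rw [hrpdef, norm_smul, Real.norm_eq_abs, abs_of_pos (div_pos hβ0 hrk)] at hrpγ
    exact (div_le_iff₀ hrk).mp (le_of_mul_le_mul_right hrpγ hn)
  have hpk : |p (Fin.last m)| ≤ β := by
    rw [hR] at hpR
    exact hpR _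
  obtain ⟨hpl, hpu⟩ := abs_le.mp hpk
  have hN : ‖r‖ ^ 2 = ⟪π r, π r⟫ + s * s := by
    rw [← real_inner_self_eq_norm_sq, hsplit]
  have hN' : s * s ≤ ‖r‖ ^ 2 := by
    have := real_inner_self_nonneg (x := π r)
    linarith
  have hp := hsplit p r
  rw [hpP, ← hs] at hp
  have hπr : π r ≠ 0 := by
    intro h0
    rw [h0, inner_zero_right, zero_add] at hN hp
    have h1 : p (Fin.last m) = s := mul_right_cancel₀ hrk.ne' (hp.symm.trans hN)
    nlinarith
  obtain ⟨t, ⟨ht0, ht1⟩, rfl⟩ : ∃ t ∈ Icc (0 : ℝ) 1, t • p = y := by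
    rw [segment_eq_image_lineMap] at hy
    simpa [AffineMap.lineMap_apply] using hy
  have hδt : 1 - t ≤ δ := by
    rw [infDist_hyperplane r hr, infDist_hyperplane r hr, real_inner_smul_left, hpP,
      inner_zero_left, zero_sub, abs_neg, ← mul_div_assoc,
      div_le_div_iff_of_pos_right hn, abs_of_pos (pow_pos hn 2)] at hyP
    have h1 := (neg_le_abs _).trans hyP
    exact le_of_mul_le_mul_right (by linarith) (pow_pos hn 2)
  have hP'' : P' = {z | ⟪z, π r⟫ = ‖r‖ ^ 2 + β * s} := by
    rw [hP']
    ext z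
    constructor
    · rintro ⟨x, ⟨hx1, hx2⟩, rfl⟩
      simp only [mem_ofPred_eq] at hx1 hx2 ⊢
      rw [hsplit, hx2] at hx1
      linarith
    · intro hz
      -- lift `z` to height `-β`
      let x : EuclideanSpace ℝ (Fin (m + 1)) :=
        WithLp.toLp 2 (Fin.snoc (α := fun _ => ℝ) (fun i => z i) (-β))
      have hxl : x (Fin.last m) = -β := Fin.snoc_last (α := fun _ => ℝ) _ _
      have hxz : π x = z := by
        ext i
        rw [hπ]
        exact Fin.snoc_castSucc (α := fun _ => ℝ) _ _ _
      refine ⟨x, ⟨?_, hxl⟩, hxz⟩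
      simp only [mem_ofPred_eq] at hz ⊢
      rw [hsplit, hxz, hxl, hz]
      ring
  have hπy : π (t • p) = t • π p := by
    ext i
    simp [hπ]
  have hM : 0 < ‖r‖ ^ 2 + β * s := by positivity
  rw [hP'', infDist_hyperplane _ hπr, infDist_hyperplane _ hπr, hπy, real_inner_smul_left,
    inner_zero_left, zero_sub, abs_neg, abs_of_pos hM, ← mul_div_assoc]
  apply div_le_div_of_nonneg_right _ (norm_nonneg _)
  have hval : t * ⟪π p, π r⟫ - (‖r‖ ^ 2 + β * s)
      = -((1 - t) * (‖r‖ ^ 2 + β * s) + t * ((p (Fin.last m) + β) * s)) := by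
    rw [hp]
    ring
  have hq0 : 0 ≤ (p (Fin.last m) + β) * s := mul_nonneg (by linarith) hrk.le
  have hq1 : (p (Fin.last m) + β) * s ≤ 2 * γ * (‖r‖ ^ 2 + β * s) := by
    calc (p (Fin.last m) + β) * s ≤ (2 * (γ * s)) * s :=
          mul_le_mul_of_nonneg_right (by linarith) hrk.le
      _ = 2 * γ * (s * s) := by ring
      _ ≤ 2 * γ * (‖r‖ ^ 2 + β * s) := by
          have := mul_pos hβ0 hrk
          gcongr
          linarith
  rw [hval, abs_neg, abs_of_nonneg
    (add_nonneg (mul_nonneg (by linarith) hM.le) (mul_nonneg ht0 hq0)), add_mul δ]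
  exact add_le_add (mul_le_mul_of_nonneg_right hδt hM.le)
    ((mul_le_of_le_one_left hq0 ht1).trans hq1)
end

section
/- Let S ⊂ ℝⁿ be a well-centered convex body with inner John ellipsoid E, coordinates along the principal axes of E with semi-axis lengths a¹,…,aⁿ > 0. Fix 0 ≤ s ≤ s₀ < 1 and set c₀ = (1 + s₀^(1/2^n))/(1 − s₀^(1/2^n)). Suppose y ∈ S and p₁ ∈ ℝ satisfy: |p₁| ≤ c₀^(n−1) n a¹; the first coordinate y¹ of y lies in the segment [0, p₁] and |y¹ − p₁| ≤ (2n−1) s^(1/2^(n−1)) |p₁|; and the hyperplane {x ∈ ℝⁿ : x¹ = p₁} does not meet the interior of S. Then there exists a hyperplane P supporting S with dist(y, P) ≤ n^(3/2) c₀^(n−1) (n − 1/2) s^(1/2^(n−1)) diam(P^⊥ ∩ S). -/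
/-!
The supporting hyperplane is the one orthogonal to the first axis on the side of `p₁`.
Since `E ⊆ S`, the origin is interior to `S`, so `p₁ ≠ 0`, and by convexity `S` lies on the
origin's side of `{x | x¹ = p₁}` (`signed_coord_le`): otherwise an open segment from the origin
to a point of `S` would cross that plane inside the interior. Hence the maximum of the signed
first coordinate over `S` is at most `|p₁|`, and the distance from `y` to the corresponding
supporting hyperplane is at most `|y¹ - p₁| ≤ (2n-1) s^(1/2^(n-1)) c₀^(n-1) n a¹`. The
principal axis of `E` gives `diam (P^⊥ ∩ S) ≥ 2 a¹`, and `n ≤ n^(3/2)` finishes the estimate.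
-/

open Metric Set
open scoped RealInnerProductSpace Pointwise

lemma zero_mem_interior_of_ellipsoid {n : ℕ} {S : Set (EuclideanSpace ℝ (Fin n))}
    (a : Fin n → ℝ) (hES : {x : EuclideanSpace ℝ (Fin n) | ∑ i, (x i / a i) ^ 2 ≤ 1} ⊆ S) :
    (0 : EuclideanSpace ℝ (Fin n)) ∈ interior S := by
  have hopen : IsOpen {x : EuclideanSpace ℝ (Fin n) | ∑ i, (x i / a i) ^ 2 < 1} := by
    refine isOpen_lt ?_ continuous_const
    fun_prop
  have hsub : {x : EuclideanSpace ℝ (Fin n) | ∑ i, (x i / a i) ^ 2 < 1} ⊆ S :=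
    fun x hx => hES (show ∑ i, (x i / a i) ^ 2 ≤ 1 from le_of_lt hx)
  exact interior_maximal hsub hopen (by simp)

/-- If the plane `{x | x i = p}` misses the interior of the convex set `S`, and the origin is
interior, then `S` lies on the origin's side of it; here `σ = ±1` is the sign of `p`. -/
lemma signed_coord_le {n : ℕ} {S : Set (EuclideanSpace ℝ (Fin n))} (hS : Convex ℝ S)
    (h0 : (0 : EuclideanSpace ℝ (Fin n)) ∈ interior S) (i : Fin n) {p σ : ℝ}
    (hσ : σ * σ = 1) (hσp : σ * p = |p|) (hplane : ∀ x ∈ interior S, x i ≠ p)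
    {x : EuclideanSpace ℝ (Fin n)} (hx : x ∈ S) : σ * x i ≤ |p| := by
  by_contra! hlt
  have hp : 0 < |p| := by
    have : p ≠ 0 := fun h => hplane 0 h0 (by simp [h])
    positivity
  have hpos : 0 < σ * x i := hp.trans hlt
  -- the point of the segment from `0` to `x` lying on the plane
  have hmem : (|p| / (σ * x i)) • x ∈ interior S := by
    have h1 : |p| / (σ * x i) < 1 := (div_lt_one hpos).2 hlt
    have := hS.combo_interior_self_mem_interior h0 hx (a := 1 - |p| / (σ * x i))
      (b := |p| / (σ * x i)) (by linarith) (by positivity) (by ring)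
    simpa using this
  refine hplane _ hmem ?_
  have hσ0 : σ ≠ 0 := fun h => by simp [h] at hσ
  have hx0 : x i ≠ 0 := fun h => by simp [h] at hpos
  simp only [PiLp.smul_apply, smul_eq_mul]
  rw [← hσp]
  field_simp

/-- The hyperplane `⟪x, v⟫ = c` with unit normal `v` is at distance at most `|c - ⟪y, v⟫|`
from `y`. -/
lemma infDist_hyperplane_le {n : ℕ} (y v : EuclideanSpace ℝ (Fin n)) (hv : ‖v‖ = 1) (c : ℝ) :
    infDist y {x | ⟪x, v⟫ = c} ≤ |c - ⟪y, v⟫| := by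
  have hz : y + (c - ⟪y, v⟫) • v ∈ {x : EuclideanSpace ℝ (Fin n) | ⟪x, v⟫ = c} := by
    simp [inner_add_left, inner_smul_left, hv]
  refine (infDist_le_dist_of_mem hz).trans ?_
  simp [dist_eq_norm, norm_smul, hv]

/-- Let `S ⊂ ℝⁿ` be a well-centered convex body with inner
John ellipsoid `E = {x | ∑ i, (xⁱ/aⁱ)² ≤ 1}` (`aⁱ > 0`, `E ⊆ S ⊆ n • E`).
Fix `0 ≤ s ≤ s₀ < 1` and set `c₀ = (1 + s₀^(1/2^n))/(1 - s₀^(1/2^n))`.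
Suppose `y ∈ S` and `p₁ ∈ ℝ` satisfy `|p₁| ≤ c₀^(n-1) n a¹`; the first
coordinate `y¹` of `y` lies in `[0, p₁]` with
`|y¹ - p₁| ≤ (2n-1) s^(1/2^(n-1)) |p₁|`; and the hyperplane `{x | x¹ = p₁}`
does not meet the interior of `S`.  Then some hyperplane `P` supporting `S`
satisfies `dist(y, P) ≤ n^(3/2) c₀^(n-1) (n - 1/2) s^(1/2^(n-1)) diam (P^⊥ ∩ S)`. -/
theorem statement12 (n : ℕ) (hn : 1 ≤ n)
    (S : Set (EuclideanSpace ℝ (Fin n)))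
    (hScomp : IsCompact S) (hSconv : Convex ℝ S) (hSint : (interior S).Nonempty)
    (a : Fin n → ℝ) (ha : ∀ i, 0 < a i)
    (E : Set (EuclideanSpace ℝ (Fin n)))
    (hE : E = {x | ∑ i, (x i / a i) ^ 2 ≤ 1})
    (hES : E ⊆ S) (hSE : S ⊆ (n : ℝ) • E)
    (s s₀ : ℝ) (hs : 0 ≤ s) (hss₀ : s ≤ s₀) (hs₀ : s₀ < 1)
    (c₀ : ℝ) (hc₀ : c₀ = (1 + s₀ ^ ((1 : ℝ) / 2 ^ n)) / (1 - s₀ ^ ((1 : ℝ) / 2 ^ n)))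
    (y : EuclideanSpace ℝ (Fin n)) (hy : y ∈ S)
    (p₁ : ℝ)
    (hp₁ : |p₁| ≤ c₀ ^ (n - 1) * n * a ⟨0, by omega⟩)
    (hy₁ : y ⟨0, by omega⟩ ∈ segment ℝ 0 p₁)
    (hyp₁ : |y ⟨0, by omega⟩ - p₁| ≤ (2 * (n : ℝ) - 1) * s ^ ((1 : ℝ) / 2 ^ (n - 1)) * |p₁|)
    (hplane : ∀ x ∈ interior S, x ⟨0, by omega⟩ ≠ p₁) :
    ∃ (v : EuclideanSpace ℝ (Fin n)) (c : ℝ), v ≠ 0 ∧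
      ({x | ⟪x, v⟫ = c} ∩ S).Nonempty ∧
      (∀ x ∈ S, ⟪x, v⟫ ≤ c) ∧
      infDist y {x | ⟪x, v⟫ = c} ≤
        (n : ℝ) ^ ((3 : ℝ) / 2) * c₀ ^ (n - 1) * ((n : ℝ) - 1 / 2) *
          s ^ ((1 : ℝ) / 2 ^ (n - 1)) *
          diam ((Submodule.span ℝ {v} : Set (EuclideanSpace ℝ (Fin n))) ∩ S) := by
  subst hE
  set i : Fin n := ⟨0, by omega⟩ with hi
  set t : ℝ := s ^ ((1 : ℝ) / 2 ^ (n - 1)) with ht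
  have ht0 : 0 ≤ t := Real.rpow_nonneg hs _
  have hn1 : (1 : ℝ) ≤ n := by exact_mod_cast hn
  have h0 := zero_mem_interior_of_ellipsoid a hES
  have hc₀0 : 0 ≤ c₀ := by
    have h1 : s₀ ^ ((1 : ℝ) / 2 ^ n) < 1 :=
      Real.rpow_lt_one (hs.trans hss₀) hs₀ (by positivity)
    have h2 : 0 ≤ s₀ ^ ((1 : ℝ) / 2 ^ n) := Real.rpow_nonneg (hs.trans hss₀) _
    rw [hc₀]
    exact div_nonneg (by linarith) (by linarith)
  obtain ⟨σ, hσ, hσp⟩ : ∃ σ : ℝ, σ * σ = 1 ∧ σ * p₁ = |p₁| := by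
    rcases le_total 0 p₁ with h | h
    · exact ⟨1, by norm_num, by simp [abs_of_nonneg h]⟩
    · exact ⟨-1, by norm_num, by simp [abs_of_nonpos h]⟩
  have hσabs : |σ| = 1 := by
    rcases mul_self_eq_one_iff.1 hσ with h | h <;> simp [h]
  have hσ0 : σ ≠ 0 := fun h => by simp [h] at hσ
  set v : EuclideanSpace ℝ (Fin n) := σ • EuclideanSpace.single i 1 with hv
  have hvn : ‖v‖ = 1 := by simp [hv, norm_smul, hσabs]
  have hinner : ∀ x : EuclideanSpace ℝ (Fin n), ⟪x, v⟫ = σ * x i := by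
    intro x
    simp [hv, inner_smul_right, EuclideanSpace.inner_single_right]
  obtain ⟨z, hzS, hz⟩ := hScomp.exists_isMaxOn ⟨y, hy⟩
    (f := fun x : EuclideanSpace ℝ (Fin n) => ⟪x, v⟫) (by fun_prop)
  have hmax : ∀ x ∈ S, ⟪x, v⟫ ≤ ⟪z, v⟫ := fun x hx => hz hx
  refine ⟨v, ⟪z, v⟫, fun h => by simp [h] at hvn, ⟨z, rfl, hzS⟩, hmax, ?_⟩
  have hdist : infDist y {x | ⟪x, v⟫ = ⟪z, v⟫} ≤ |y i - p₁| := by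
    refine (infDist_hyperplane_le y v hvn _).trans ?_
    rw [abs_of_nonneg (sub_nonneg.2 (hmax y hy)), hinner, hinner]
    have h1 := signed_coord_le hSconv h0 i hσ hσp hplane hzS
    have h2 : |p₁| - σ * y i ≤ |y i - p₁| := by
      calc |p₁| - σ * y i = -(σ * (y i - p₁)) := by rw [← hσp]; ring
        _ ≤ |σ * (y i - p₁)| := neg_le_abs _
        _ = |y i - p₁| := by rw [abs_mul, hσabs, one_mul]
    linarith
  have hdiam : 2 * a i ≤ diam ((Submodule.span ℝ {v} : Set (EuclideanSpace ℝ (Fin n))) ∩ S) := by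
    -- both endpoints `± aⁱ v` of the principal axis lie in `E`
    have hmem : ∀ r : ℝ, r * r = 1 → (r * a i) • v ∈
        (Submodule.span ℝ {v} : Set (EuclideanSpace ℝ (Fin n))) ∩ S := by
      intro r hr
      refine ⟨Submodule.smul_mem _ _ (Submodule.mem_span_singleton_self v), hES ?_⟩
      have hai := (ha i).ne'
      have hsum : ∑ j, (((r * a i) • v) j / a j) ^ 2 = 1 := by
        rw [Finset.sum_eq_single i]
        · simp only [hv, PiLp.smul_apply, smul_eq_mul, PiLp.single_apply, if_true]
          field_simp
          linear_combination (r ^ 2) * hσ + hr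
        · intro j _ hj
          simp [hv, hj]
        · simp
      exact hsum.le
    have hb : Bornology.IsBounded
        ((Submodule.span ℝ {v} : Set (EuclideanSpace ℝ (Fin n))) ∩ S) :=
      hScomp.isBounded.subset inter_subset_right
    refine le_trans (le_of_eq ?_)
      (dist_le_diam_of_mem hb (hmem 1 (by norm_num)) (hmem (-1) (by norm_num)))
    rw [dist_eq_norm, ← sub_smul, norm_smul, hvn, Real.norm_eq_abs,
      abs_of_pos (by linarith [ha i])]
    ring
  have hnpow : (n : ℝ) ≤ (n : ℝ) ^ ((3 : ℝ) / 2) := by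
    simpa using Real.rpow_le_rpow_of_exponent_le hn1 (by norm_num : (1 : ℝ) ≤ 3 / 2)
  have hcn : 0 ≤ c₀ ^ (n - 1) := pow_nonneg hc₀0 _
  have hai := ha i
  have hn2 : 0 ≤ (n : ℝ) - 1 / 2 := by linarith
  have hn3 : 0 ≤ 2 * (n : ℝ) - 1 := by linarith
  calc infDist y {x | ⟪x, v⟫ = ⟪z, v⟫} ≤ |y i - p₁| := hdist
    _ ≤ (2 * (n : ℝ) - 1) * t * |p₁| := hyp₁
    _ ≤ (2 * (n : ℝ) - 1) * t * (c₀ ^ (n - 1) * n * a i) := by gcongr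
    _ = n * c₀ ^ (n - 1) * ((n : ℝ) - 1 / 2) * t * (2 * a i) := by ring
    _ ≤ _ := by gcongr
end
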